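/- Let q and q′ be odd prime powers with q ≡ 1 (mod 4) and q′ ≡ 1 (mod 4), let k be odd with 3 < k, k dividing both q−1 and q′−1, k < q−1, k < q′−1, and suppose e = (q−1)/k and e′ = (q′−1)/k are both even. Let β ∈ F_q and β′ ∈ F_{q′} be primitive k-th roots of unity. If χ_q(1−β^i) = χ_{q′}(1−β′^i) for every i with 1 ≤ i ≤ (k−1)/2, then (q,k) gives a 3-design if and only if (q′,k) gives a 3-design. (Here χ_q and χ_{q′} denote the quadratic residue characters of F_q and F_{q′}.) -/

import Mathlib

/-!
Setting: `F` is a finite field of order `q`. The projective line `PG(1,q)` is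
modelled as `Projectivization F (Fin 2 → F)`. Since scalar matrices act trivially
on the projective line, the images of a set under all elements of `SL(2,F)` form
exactly its `PSL(2,F)`-orbit; `mapSL g` is the map of the projective line induced
by `g : SL(2,F)`. For `k ∣ q - 1`, the unique subgroup of order `k` of `Fˣ` is the
set of `k`-th roots of unity `{x : F | x ^ k = 1}`, embedded into the projective
line via `x ↦ [x : 1]`. `(q, k)` gives a 3-design iff there is `lam > 0` such that
every 3-subset of the projective line lies in exactly `lam` blocks of the orbit.
-/

noncomputable section

open Matrix

/-- The point at infinity `[1 : 0]` of the projective line over `F`. -/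
def inftyPt (F : Type) [Field F] : Projectivization F (Fin 2 → F) :=
  Projectivization.mk F ![1, 0] (by
    intro h
    simpa using congrFun h 0)

/-- The embedding of `F` into the projective line, `x ↦ [x : 1]`. -/
def embedPt (F : Type) [Field F] (x : F) : Projectivization F (Fin 2 → F) :=
  Projectivization.mk F ![x, 1] (by
    intro h
    simpa using congrFun h 1)

/-- The action of `g : SL(2,F)` on the projective line (as linear fractional
transformation). -/
def mapSL {F : Type} [Field F] (g : Matrix.SpecialLinearGroup (Fin 2) F) :
    Projectivization F (Fin 2 → F) → Projectivization F (Fin 2 → F) :=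
  Projectivization.map (Matrix.SpecialLinearGroup.toLin' g : (Fin 2 → F) →ₗ[F] (Fin 2 → F))
    (Matrix.SpecialLinearGroup.toLin' g).injective

/-- The starter block: the unique subgroup of order `k` of `Fˣ` (the `k`-th roots
of unity, for `k ∣ q - 1`), regarded as a subset of the projective line. -/
def starterB (F : Type) [Field F] (k : ℕ) : Set (Projectivization F (Fin 2 → F)) :=
  embedPt F '' {x : F | x ^ k = 1}

/-- The `PSL(2,F)`-orbit `GB` of the starter block. -/
def designBlocks (F : Type) [Field F] (k : ℕ) :
    Set (Set (Projectivization F (Fin 2 → F))) :=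
  {S | ∃ g : Matrix.SpecialLinearGroup (Fin 2) F, S = mapSL g '' starterB F k}

/-- `GB` is the block set of a `3-(q+1, k, lam)` design: `lam` is positive and every
3-subset of the projective line is contained in exactly `lam` blocks. -/
def isThreeDesign (F : Type) [Field F] (k lam : ℕ) : Prop :=
  0 < lam ∧
    ∀ T : Finset (Projectivization F (Fin 2 → F)), T.card = 3 →
      {S ∈ designBlocks F k | (T : Set (Projectivization F (Fin 2 → F))) ⊆ S}.ncard = lam

/-- `(q, k)` gives a 3-design. -/
def gives3Design (F : Type) [Field F] (k : ℕ) : Prop :=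
  ∃ lam : ℕ, isThreeDesign F k lam

section helpers5

set_option linter.unusedSectionVars false

variable {F : Type} [Field F] [Fintype F] [DecidableEq F]

local notation "PP" => Projectivization F (Fin 2 → F)

instance inst5 : Fintype PP := Fintype.ofFinite _

def dt5 (p q : Fin 2 → F) : F := p 0 * q 1 - p 1 * q 0

lemma dt5_smul (a b : F) (p q : Fin 2 → F) : dt5 (a • p) (b • q) = a * b * dt5 p q := by
  simp [dt5]; ring

def eps5 (P Q R : PP) : ℤ :=
  quadraticChar F (dt5 P.rep Q.rep * dt5 Q.rep R.rep * dt5 R.rep P.rep)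

lemma eps5_mk (p q r : Fin 2 → F) (hp : p ≠ 0) (hq : q ≠ 0) (hr : r ≠ 0) :
    eps5 (Projectivization.mk F p hp) (Projectivization.mk F q hq) (Projectivization.mk F r hr)
      = quadraticChar F (dt5 p q * dt5 q r * dt5 r p) := by
  obtain ⟨a, ha⟩ := Projectivization.exists_smul_eq_mk_rep F p hp
  obtain ⟨b, hb⟩ := Projectivization.exists_smul_eq_mk_rep F q hq
  obtain ⟨c, hc⟩ := Projectivization.exists_smul_eq_mk_rep F r hr
  unfold eps5
  rw [← ha, ← hb, ← hc]
  simp only [Units.smul_def, dt5_smul]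
  have : (a * b * dt5 p q * (b * c * dt5 q r) * (c * a * dt5 r p) : F)
      = (a * b * c : F) ^ 2 * (dt5 p q * dt5 q r * dt5 r p) := by ring
  rw [this, map_mul, quadraticChar_sq_one' (by simp), one_mul]

lemma dt5_eq_zero (p q : Fin 2 → F) (hp : p ≠ 0) (hq : q ≠ 0) :
    dt5 p q = 0 ↔ Projectivization.mk F p hp = Projectivization.mk F q hq := by
  rw [Projectivization.mk_eq_mk_iff']
  constructor
  · intro h
    have h' : p 0 * q 1 = p 1 * q 0 := sub_eq_zero.mp h
    by_cases h0 : q 0 = 0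
    · have h1 : q 1 ≠ 0 := by
        intro h1; apply hq; ext i; fin_cases i <;> simp [h0, h1]
      refine ⟨p 1 / q 1, ?_⟩
      ext i; fin_cases i
      · simp [h0] at h' ⊢
        rcases h' with h' | h'
        · exact h'.symm
        · exact absurd h' h1
      · simp; field_simp
    · refine ⟨p 0 / q 0, ?_⟩
      ext i; fin_cases i
      · simp; field_simp
      · simp; field_simp; linear_combination h'
  · rintro ⟨a, rfl⟩
    simp [dt5]; ring

lemma eps5_ne_zero (P Q R : PP) : eps5 P Q R ≠ 0 ↔ P ≠ Q ∧ Q ≠ R ∧ R ≠ P := by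
  induction P using Projectivization.ind with | h p hp => ?_
  induction Q using Projectivization.ind with | h q hq => ?_
  induction R using Projectivization.ind with | h r hr => ?_
  rw [eps5_mk, Ne, quadraticChar_eq_zero_iff]
  simp only [mul_eq_zero, not_or, Ne, ← dt5_eq_zero]
  tauto

/-- map by a matrix given by an injective linear map -/
lemma eps5_map (L : (Fin 2 → F) →ₗ[F] (Fin 2 → F)) (hL : Function.Injective L) (d : F)
    (hd : ∀ p q, dt5 (L p) (L q) = d * dt5 p q) (P Q R : PP) :
    eps5 (Projectivization.map L hL P) (Projectivization.map L hL Q) (Projectivization.map L hL R)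
      = quadraticChar F d ^ 3 * eps5 P Q R := by
  induction P using Projectivization.ind with | h p hp => ?_
  induction Q using Projectivization.ind with | h q hq => ?_
  induction R using Projectivization.ind with | h r hr => ?_
  simp only [Projectivization.map_mk, eps5_mk, hd]
  simp only [map_mul]; ring

lemma sl5_apply (g : Matrix.SpecialLinearGroup (Fin 2) F) (p : Fin 2 → F) :
    (Matrix.SpecialLinearGroup.toLin' g : (Fin 2 → F) →ₗ[F] (Fin 2 → F)) p = g.1 *ᵥ p := by
  rfl

lemma eps5_SL (g : Matrix.SpecialLinearGroup (Fin 2) F) (P Q R : PP) :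
    eps5 (mapSL g P) (mapSL g Q) (mapSL g R) = eps5 P Q R := by
  unfold mapSL
  rw [eps5_map _ _ 1]
  · simp
  · intro p q
    rw [sl5_apply, sl5_apply]
    have := g.2
    rw [Matrix.det_fin_two] at this
    simp only [dt5, Matrix.mulVec, dotProduct, Fin.sum_univ_two]
    linear_combination (p 0 * q 1 - p 1 * q 0) * this

lemma mapSL5_inj (g : Matrix.SpecialLinearGroup (Fin 2) F) : Function.Injective (mapSL g) :=
  Projectivization.map_injective _ _

lemma mapSL5_bij (g : Matrix.SpecialLinearGroup (Fin 2) F) : Function.Bijective (mapSL g) :=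
  Finite.injective_iff_bijective.mp (mapSL5_inj g)

lemma mapSL5_mul (g h : Matrix.SpecialLinearGroup (Fin 2) F) (P : PP) :
    mapSL (g * h) P = mapSL g (mapSL h P) := by
  induction P using Projectivization.ind with | h p hp => ?_
  unfold mapSL
  simp only [Projectivization.map_mk]
  congr 1
  simp only [LinearEquiv.coe_coe, map_mul]
  rfl

lemma trans5 (P Q R P' Q' R' : PP) (h : eps5 P Q R ≠ 0)
    (he : eps5 P Q R = eps5 P' Q' R') :
    ∃ g : Matrix.SpecialLinearGroup (Fin 2) F, mapSL g P = P' ∧ mapSL g Q = Q' ∧ mapSL g R = R' := by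
  have h' : eps5 P' Q' R' ≠ 0 := he ▸ h
  induction P using Projectivization.ind with | h p hp => ?_
  induction Q using Projectivization.ind with | h q hq => ?_
  induction R using Projectivization.ind with | h r hr => ?_
  induction P' using Projectivization.ind with | h p' hp' => ?_
  induction Q' using Projectivization.ind with | h q' hq' => ?_
  induction R' using Projectivization.ind with | h r' hr' => ?_
  rw [eps5_mk, Ne, quadraticChar_eq_zero_iff] at h h'
  rw [eps5_mk, eps5_mk] at he
  obtain ⟨A, hA⟩ : ∃ A, A = dt5 p q := ⟨_, rfl⟩
  obtain ⟨B, hB⟩ : ∃ A, A = dt5 q r := ⟨_, rfl⟩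
  obtain ⟨C, hC⟩ : ∃ A, A = dt5 r p := ⟨_, rfl⟩
  obtain ⟨A', hA'⟩ : ∃ A, A = dt5 p' q' := ⟨_, rfl⟩
  obtain ⟨B', hB'⟩ : ∃ A, A = dt5 q' r' := ⟨_, rfl⟩
  obtain ⟨C', hC'⟩ : ∃ A, A = dt5 r' p' := ⟨_, rfl⟩
  rw [← hA, ← hB, ← hC] at h he
  rw [← hA', ← hB', ← hC'] at h' he
  have hs : IsSquare ((A * B * C) * (A' * B' * C')) := by
    rw [← quadraticChar_one_iff_isSquare (mul_ne_zero h h'), map_mul, he, ← sq]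
    exact quadraticChar_sq_one h'
  obtain ⟨s0, hs0⟩ := hs
  simp only [mul_eq_zero, not_or] at h h'
  obtain ⟨⟨nA, nB⟩, nC⟩ := h
  obtain ⟨⟨nA', nB'⟩, nC'⟩ := h'
  obtain ⟨s, hs⟩ : ∃ s, s = s0 / (A' * B' * C') := ⟨_, rfl⟩
  have hs2 : s ^ 2 * (A' * B' * C') = A * B * C := by
    rw [hs]; field_simp; linear_combination -hs0
  have ns : s ≠ 0 := by
    rintro rfl
    have : A * B * C = 0 := by rw [← hs2]; ring
    exact (mul_ne_zero (mul_ne_zero nA nB) nC) this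
  obtain ⟨x, hx⟩ : ∃ x, x = s * B' / B / A := ⟨_, rfl⟩
  obtain ⟨y, hy⟩ : ∃ x, x = s * C' / C / A := ⟨_, rfl⟩
  have hxy : x * y * A' * A = 1 := by
    rw [hx, hy]; field_simp; linear_combination hs2
  let M : Matrix (Fin 2) (Fin 2) F :=
    !![x * q 1 * p' 0 - y * p 1 * q' 0, - x * q 0 * p' 0 + y * p 0 * q' 0;
       x * q 1 * p' 1 - y * p 1 * q' 1, - x * q 0 * p' 1 + y * p 0 * q' 1]
  have hM : M.det = 1 := by
    rw [Matrix.det_fin_two]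
    simp only [M, Matrix.of_apply, Matrix.cons_val', Matrix.cons_val_zero, Matrix.cons_val_one,
      Matrix.cons_val_fin_one]
    rw [← hxy, hA, hA']
    simp only [dt5]; ring
  have hMv : ∀ v, M *ᵥ v = (x * dt5 v q) • p' + (y * dt5 p v) • q' := by
    intro v
    ext i; fin_cases i <;>
    · simp [M, Matrix.mulVec, dotProduct, Fin.sum_univ_two, dt5]; ring
  have key : B' • p' + C' • q' = - A' • r' := by
    ext i; fin_cases i <;>
    · simp [hA', hB', hC', dt5]; ring
  obtain ⟨g, hg⟩ : ∃ g : Matrix.SpecialLinearGroup (Fin 2) F, g.1 = M := ⟨⟨M, hM⟩, rfl⟩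
  refine ⟨g, ?_, ?_, ?_⟩
  · simp only [mapSL, Projectivization.map_mk]
    rw [Projectivization.mk_eq_mk_iff']
    refine ⟨x * A, ?_⟩
    rw [sl5_apply, hg, hMv, ← hA]
    have : dt5 p p = 0 := by simp [dt5]; ring
    simp [this]
  · simp only [mapSL, Projectivization.map_mk]
    rw [Projectivization.mk_eq_mk_iff']
    refine ⟨y * A, ?_⟩
    rw [sl5_apply, hg, hMv, ← hA]
    have : dt5 q q = 0 := by simp [dt5]; ring
    simp [this]
  · simp only [mapSL, Projectivization.map_mk]
    rw [Projectivization.mk_eq_mk_iff']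
    refine ⟨s * A' / A, ?_⟩
    rw [sl5_apply, hg, hMv]
    have e1 : x * dt5 r q = - (s / A) * B' := by
      have : dt5 r q = - B := by rw [hB]; simp [dt5]; ring
      rw [this, hx]; field_simp
    have e2 : y * dt5 p r = - (s / A) * C' := by
      have : dt5 p r = - C := by rw [hC]; simp [dt5]; ring
      rw [this, hy]; field_simp
    rw [e1, e2, mul_smul, mul_smul, ← smul_add, key, smul_smul]
    congr 1; ring

lemma sum_eps5 (hF : ringChar F ≠ 2) :
    ∑ P : PP, ∑ Q : PP, ∑ R : PP, eps5 P Q R = 0 := by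
  obtain ⟨n, hn⟩ := quadraticChar_exists_neg_one hF
  have hn0 : n ≠ 0 := by rintro rfl; simp at hn
  let L : (Fin 2 → F) →ₗ[F] (Fin 2 → F) := Matrix.toLin' !![n, 0; 0, 1]
  have hLv : ∀ v, L v = ![n * v 0, v 1] := by
    intro v; ext i; fin_cases i <;> simp [L, Matrix.mulVec, dotProduct, Fin.sum_univ_two]
  have hL : Function.Injective L := by
    intro v w h
    rw [hLv, hLv] at h
    have h0 := congrFun h 0
    have h1 := congrFun h 1
    simp [hn0] at h0 h1
    ext i; fin_cases i <;> simp [h0, h1]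
  have hd : ∀ p q, dt5 (L p) (L q) = n * dt5 p q := by
    intro p q; rw [hLv, hLv]; simp [dt5]; ring
  have hb : Function.Bijective (Projectivization.map L hL) :=
    Finite.injective_iff_bijective.mp (Projectivization.map_injective _ _)
  have e : ∑ P : PP, ∑ Q : PP, ∑ R : PP, eps5 P Q R
      = - ∑ P : PP, ∑ Q : PP, ∑ R : PP, eps5 P Q R := by
    conv_lhs =>
      rw [← hb.sum_comp]
      enter [2, P]
      rw [← hb.sum_comp]
      enter [2, Q]
      rw [← hb.sum_comp]
      enter [2, R]
      rw [eps5_map L hL n hd, hn]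
    simp [Finset.sum_neg_distrib]
  omega

open Classical in
def ind5 (S : Set PP) (P : PP) : ℤ := if P ∈ S then 1 else 0

def W5 (S : Set PP) : ℤ :=
  ∑ P : PP, ∑ Q : PP, ∑ R : PP, ind5 S P * ind5 S Q * ind5 S R * eps5 P Q R

lemma W5_image (g : Matrix.SpecialLinearGroup (Fin 2) F) (S : Set PP) :
    W5 (mapSL g '' S) = W5 S := by
  unfold W5
  have hb := mapSL5_bij g
  have hi : ∀ P, ind5 (mapSL g '' S) (mapSL g P) = ind5 S P := by
    intro P
    have := (mapSL5_inj g).mem_set_image (s := S) (a := P)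
    unfold ind5
    split_ifs <;> tauto
  conv_lhs =>
    rw [← hb.sum_comp]
    enter [2, P]
    rw [← hb.sum_comp]
    enter [2, Q]
    rw [← hb.sum_comp]
    enter [2, R]
    rw [eps5_SL, hi, hi, hi]

open Classical in
def f5 (k : ℕ) (P Q R : PP) : ℕ :=
  {S ∈ designBlocks F k | (({P, Q, R} : Finset PP) : Set PP) ⊆ S}.ncard

open Classical in
lemma f5_sum (k : ℕ) (P Q R : PP) :
    (f5 k P Q R : ℤ) = ∑ S ∈ (designBlocks F k).toFinset, ind5 S P * ind5 S Q * ind5 S R := by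
  unfold f5
  rw [Set.ncard_eq_toFinset_card']
  have : ∀ S : Set PP, ind5 S P * ind5 S Q * ind5 S R = if P ∈ S ∧ Q ∈ S ∧ R ∈ S then 1 else 0 := by
    intro S; unfold ind5; split_ifs <;> simp_all
  simp only [this]
  rw [Finset.sum_boole]
  congr 2
  ext S
  simp [Set.insert_subset_iff]
  tauto

lemma f5_SL (k : ℕ) (g : Matrix.SpecialLinearGroup (Fin 2) F) (P Q R : PP) :
    f5 k (mapSL g P) (mapSL g Q) (mapSL g R) = f5 k P Q R := by
  unfold f5
  conv_rhs => rw [← Set.ncard_image_of_injective _ (mapSL5_inj g).image_injective]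
  congr 1
  ext S
  simp only [Set.mem_ofPred_eq, Set.mem_image, Finset.coe_insert, Finset.coe_singleton,
    Set.insert_subset_iff, Set.singleton_subset_iff]
  have hone : ∀ P : PP, mapSL g (mapSL g⁻¹ P) = P := by
    intro P
    rw [← mapSL5_mul, mul_inv_cancel]
    induction P using Projectivization.ind with | h p hp => ?_
    simp [mapSL, Projectivization.map_mk]
  constructor
  · rintro ⟨⟨h, rfl⟩, hP, hQ, hR⟩
    have e : mapSL g '' (mapSL (g⁻¹ * h) '' starterB F k) = mapSL h '' starterB F k := by
      rw [Set.image_image]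
      apply Set.image_congr
      intro x _
      rw [mapSL5_mul, hone]
    rw [← e, (mapSL5_inj g).mem_set_image] at hP hQ hR
    exact ⟨_, ⟨⟨_, rfl⟩, hP, hQ, hR⟩, e⟩
  · rintro ⟨S, ⟨⟨h, rfl⟩, hP, hQ, hR⟩, rfl⟩
    refine ⟨⟨g * h, ?_⟩, Set.mem_image_of_mem _ hP, Set.mem_image_of_mem _ hQ,
      Set.mem_image_of_mem _ hR⟩
    rw [Set.image_image]
    apply Set.image_congr
    intro x _
    rw [mapSL5_mul]

lemma total5 (k : ℕ) :
    ∑ P : PP, ∑ Q : PP, ∑ R : PP, (f5 k P Q R : ℤ) * eps5 P Q R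
      = (designBlocks F k).ncard * W5 (starterB F k) := by
  classical
  simp only [f5_sum, Finset.sum_mul]
  have : ∀ S ∈ (designBlocks F k).toFinset, W5 S = W5 (starterB F k) := by
    intro S hS
    simp only [Set.mem_toFinset] at hS
    obtain ⟨g, rfl⟩ := hS
    exact W5_image g _
  rw [Set.ncard_eq_toFinset_card', ← nsmul_eq_mul, ← Finset.sum_const, ← Finset.sum_congr rfl this]
  unfold W5
  rw [Finset.sum_comm (s := (designBlocks F k).toFinset)]
  apply Finset.sum_congr rfl; intro P _
  rw [Finset.sum_comm (s := (designBlocks F k).toFinset)]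
  apply Finset.sum_congr rfl; intro Q _
  rw [Finset.sum_comm (s := (designBlocks F k).toFinset)]

lemma iff5 (hF : ringChar F ≠ 2) (k : ℕ)
    (hB : ∃ P Q R : PP, P ∈ starterB F k ∧ Q ∈ starterB F k ∧ R ∈ starterB F k ∧
      P ≠ Q ∧ Q ≠ R ∧ R ≠ P) :
    gives3Design F k ↔ W5 (starterB F k) = 0 := by
  classical
  obtain ⟨P0, Q0, R0, hP0, hQ0, hR0, hne⟩ := hB
  have hmem : starterB F k ∈ designBlocks F k := by
    refine ⟨1, ?_⟩
    symm
    have hid : (mapSL (1 : Matrix.SpecialLinearGroup (Fin 2) F)) = id := by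
      funext P
      induction P using Projectivization.ind with | h p hp => ?_
      simp [mapSL, Projectivization.map_mk]
    rw [hid, Set.image_id]
  have hN : ((designBlocks F k).ncard : ℤ) ≠ 0 := by
    have := Set.ncard_pos (s := designBlocks F k) |>.mpr ⟨_, hmem⟩
    omega
  constructor
  · rintro ⟨lam, hl, hT⟩
    have h : ∀ P Q R : PP, (f5 k P Q R : ℤ) * eps5 P Q R = lam * eps5 P Q R := by
      intro P Q R
      by_cases h0 : eps5 P Q R = 0
      · simp [h0]
      · obtain ⟨h1, h2, h3⟩ := (eps5_ne_zero _ _ _).mp h0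
        have := hT {P, Q, R} (Finset.card_eq_three.mpr ⟨P, Q, R, h1, h3.symm, h2, rfl⟩)
        rw [← this]; rfl
    have ht := total5 (F := F) k
    simp only [h, ← Finset.mul_sum, sum_eps5 hF, mul_zero] at ht
    rcases mul_eq_zero.mp ht.symm with h | h
    · exact absurd h hN
    · exact h
  · intro hW
    have ht := total5 (F := F) k
    rw [hW, mul_zero] at ht
    -- values
    have hval : ∀ P Q R : PP, eps5 P Q R = 0 ∨ eps5 P Q R = 1 ∨ eps5 P Q R = -1 := by
      intro P Q R
      unfold eps5
      by_cases h : (dt5 P.rep Q.rep * dt5 Q.rep R.rep * dt5 R.rep P.rep) = 0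
      · left; simp [h]
      · right; exact quadraticChar_dichotomy h
    have e0 : eps5 P0 Q0 R0 ≠ 0 := (eps5_ne_zero _ _ _).mpr hne
    -- there is a triple of opposite sign
    have hsum := sum_eps5 hF
    have hopp : ∃ P Q R : PP, eps5 P Q R = - eps5 P0 Q0 R0 := by
      by_contra! hcon
      have h1 : ∀ P Q R : PP, 0 ≤ eps5 P0 Q0 R0 * eps5 P Q R := by
        intro P Q R
        have a := hcon P Q R
        rcases hval P Q R with h | h | h <;> rcases hval P0 Q0 R0 with h' | h' | h' <;>
          simp_all
      have h2 : ∑ P : PP, ∑ Q : PP, ∑ R : PP, eps5 P0 Q0 R0 * eps5 P Q R = 0 := by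
        simp only [← Finset.mul_sum, hsum, mul_zero]
      rw [Finset.sum_eq_zero_iff_of_nonneg (fun P _ => Finset.sum_nonneg fun Q _ =>
        Finset.sum_nonneg fun R _ => h1 P Q R)] at h2
      have h3 := h2 P0 (Finset.mem_univ _)
      rw [Finset.sum_eq_zero_iff_of_nonneg (fun Q _ =>
        Finset.sum_nonneg fun R _ => h1 _ Q R)] at h3
      have h4 := h3 Q0 (Finset.mem_univ _)
      rw [Finset.sum_eq_zero_iff_of_nonneg (fun R _ => h1 _ _ R)] at h4
      have h5 := h4 R0 (Finset.mem_univ _)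
      exact e0 (by simpa using h5)
    obtain ⟨P1, Q1, R1, e1⟩ := hopp
    obtain ⟨a, ha⟩ : ∃ a : ℤ, a = f5 k P0 Q0 R0 := ⟨_, rfl⟩
    obtain ⟨b, hb⟩ : ∃ a : ℤ, a = f5 k P1 Q1 R1 := ⟨_, rfl⟩
    obtain ⟨ε, hε⟩ : ∃ a : ℤ, a = eps5 P0 Q0 R0 := ⟨_, rfl⟩
    have hf : ∀ P Q R : PP, eps5 P Q R ≠ 0 →
        (eps5 P Q R = ε ∧ (f5 k P Q R : ℤ) = a) ∨ (eps5 P Q R = -ε ∧ (f5 k P Q R : ℤ) = b) := by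
      intro P Q R h
      have : eps5 P Q R = ε ∨ eps5 P Q R = -ε := by
        rw [hε]
        rcases hval P Q R with h | h | h <;> rcases hval P0 Q0 R0 with h' | h' | h' <;>
          simp_all
      rcases this with h' | h'
      · left
        refine ⟨h', ?_⟩
        obtain ⟨g, h1, h2, h3⟩ := trans5 P Q R P0 Q0 R0 h (h'.trans hε)
        rw [ha, ← h1, ← h2, ← h3, f5_SL]
      · right
        refine ⟨h', ?_⟩
        obtain ⟨g, h1, h2, h3⟩ := trans5 P Q R P1 Q1 R1 h (by rw [h', hε, e1])
        rw [hb, ← h1, ← h2, ← h3, f5_SL]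
    have hterm : ∀ P Q R : PP, 2 * ((f5 k P Q R : ℤ) * eps5 P Q R)
        = (a + b) * eps5 P Q R + (a - b) * ε * (eps5 P Q R) ^ 2 := by
      intro P Q R
      by_cases h : eps5 P Q R = 0
      · simp [h]
      · have hε2 : ε ^ 2 = 1 := by
          rw [hε]; rcases hval P0 Q0 R0 with h' | h' | h' <;> simp_all
        rcases hf P Q R h with ⟨h1, h2⟩ | ⟨h1, h2⟩ <;> rw [h1, h2]
        · linear_combination (- (a - b) * ε) * hε2
        · linear_combination (- (a - b) * ε) * hε2
    have hS : 2 * ∑ P : PP, ∑ Q : PP, ∑ R : PP, (f5 k P Q R : ℤ) * eps5 P Q R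
        = (a + b) * ∑ P : PP, ∑ Q : PP, ∑ R : PP, eps5 P Q R
          + (a - b) * ε * ∑ P : PP, ∑ Q : PP, ∑ R : PP, (eps5 P Q R) ^ 2 := by
      simp only [Finset.mul_sum, hterm, Finset.sum_add_distrib]
    rw [ht, hsum] at hS
    have hpos : ∑ P : PP, ∑ Q : PP, ∑ R : PP, (eps5 P Q R) ^ 2 ≠ 0 := by
      intro h2
      rw [Finset.sum_eq_zero_iff_of_nonneg (fun P _ => Finset.sum_nonneg fun Q _ =>
        Finset.sum_nonneg fun R _ => sq_nonneg _)] at h2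
      have h3 := h2 P0 (Finset.mem_univ _)
      rw [Finset.sum_eq_zero_iff_of_nonneg (fun Q _ =>
        Finset.sum_nonneg fun R _ => sq_nonneg _)] at h3
      have h4 := h3 Q0 (Finset.mem_univ _)
      rw [Finset.sum_eq_zero_iff_of_nonneg (fun R _ => sq_nonneg _)] at h4
      have h5 := h4 R0 (Finset.mem_univ _)
      exact e0 (by simpa using h5)
    have hab : a = b := by
      have : (a - b) * ε * ∑ P : PP, ∑ Q : PP, ∑ R : PP, (eps5 P Q R) ^ 2 = 0 := by
        linarith
      have hε0 : ε ≠ 0 := hε ▸ e0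
      simp only [mul_eq_zero, hpos, hε0, or_false] at this
      linarith
    refine ⟨f5 k P0 Q0 R0, ?_, ?_⟩
    · unfold f5
      rw [Set.ncard_pos]
      refine ⟨_, hmem, ?_⟩
      simp [Set.insert_subset_iff, hP0, hQ0, hR0]
    · intro T hT
      obtain ⟨P, Q, R, h1, h2, h3, rfl⟩ := Finset.card_eq_three.mp hT
      have hh : f5 k P Q R = f5 k P0 Q0 R0 := by
        have := hf P Q R ((eps5_ne_zero _ _ _).mpr ⟨h1, h3, h2.symm⟩)
        omega
      rw [← hh]; unfold f5; congr!

lemma embed5_inj : Function.Injective (embedPt F) := by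
  intro x y h
  unfold embedPt at h
  rw [← dt5_eq_zero] at h
  simpa [dt5, sub_eq_zero] using h

lemma start5 (k : ℕ) (hk : 0 < k) (β : F) (hβ : orderOf β = k) :
    Function.Injective (fun i : Fin k => embedPt F (β ^ (i : ℕ))) ∧
    Set.range (fun i : Fin k => embedPt F (β ^ (i : ℕ))) = starterB F k := by
  have hp : IsPrimitiveRoot β k := hβ ▸ IsPrimitiveRoot.orderOf β
  constructor
  · intro i j h
    exact Fin.ext (hp.pow_inj i.2 j.2 (embed5_inj h))
  · unfold starterB
    ext P
    constructor
    · rintro ⟨i, rfl⟩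
      refine ⟨_, ?_, rfl⟩
      simp only [Set.mem_ofPred_eq]
      rw [← pow_mul, mul_comm, pow_mul, hp.pow_eq_one, one_pow]
    · rintro ⟨x, hx, rfl⟩
      have : NeZero k := ⟨hk.ne'⟩
      obtain ⟨i, hi, rfl⟩ := hp.eq_pow_of_pow_eq_one hx
      exact ⟨⟨i, hi⟩, rfl⟩

lemma W5_eq (k : ℕ) (hk : 0 < k) (β : F) (hβ : orderOf β = k) :
    W5 (starterB F k) = ∑ a : Fin k, ∑ b : Fin k, ∑ c : Fin k,
      quadraticChar F (β ^ (a : ℕ) - β ^ (b : ℕ)) * quadraticChar F (β ^ (b : ℕ) - β ^ (c : ℕ))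
        * quadraticChar F (β ^ (c : ℕ) - β ^ (a : ℕ)) := by
  classical
  obtain ⟨hi, hr⟩ := start5 k hk β hβ
  have key : ∀ f : PP → ℤ, ∑ P : PP, ind5 (starterB F k) P * f P
      = ∑ a : Fin k, f (embedPt F (β ^ (a : ℕ))) := by
    intro f
    rw [← hr, ← Finset.sum_image (s := Finset.univ) (f := f)
      (g := fun i : Fin k => embedPt F (β ^ (i : ℕ))) (fun x _ y _ h => hi h)]
    unfold ind5
    simp only [ite_mul, one_mul, zero_mul]
    rw [← Finset.sum_filter]
    apply Finset.sum_congr _ (fun _ _ => rfl)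
    ext P; simp
  have e : W5 (starterB F k) = ∑ P : PP, ind5 (starterB F k) P * ∑ Q : PP, ind5 (starterB F k) Q *
      ∑ R : PP, ind5 (starterB F k) R * eps5 P Q R := by
    unfold W5
    simp only [Finset.mul_sum, mul_assoc]
  rw [e]
  simp only [key]
  refine Finset.sum_congr rfl fun a _ => Finset.sum_congr rfl fun b _ =>
    Finset.sum_congr rfl fun c _ => ?_
  unfold embedPt
  rw [eps5_mk, map_mul, map_mul]
  simp [dt5]

lemma chi5_neg (h4 : Fintype.card F % 4 = 1) (x : F) :
    quadraticChar F (-x) = quadraticChar F x := by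
  have h1 : quadraticChar F (-1) = 1 := by
    rw [quadraticChar_one_iff_isSquare (by simp)]
    rw [FiniteField.isSquare_neg_one_iff]; omega
  rw [← neg_one_mul, map_mul, h1, one_mul]

lemma chi5_pow (k : ℕ) (hk : Odd k) (β : F) (hβ : orderOf β = k) (i : ℕ) :
    quadraticChar F (β ^ i) = 1 := by
  obtain ⟨m, hm⟩ := hk
  have hb : β ^ k = 1 := hβ ▸ pow_orderOf_eq_one β
  have hb0 : β ≠ 0 := by
    rintro rfl; rw [zero_pow (by omega)] at hb; exact zero_ne_one hb
  have : β = (β ^ (m + 1)) ^ 2 := by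
    rw [← pow_mul, show (m + 1) * 2 = k + 1 by omega, pow_succ, hb, one_mul]
  rw [map_pow, this, quadraticChar_sq_one' (pow_ne_zero _ hb0), one_pow]

lemma chi5_refl (h4 : Fintype.card F % 4 = 1) (k : ℕ) (hk : Odd k) (β : F) (hβ : orderOf β = k)
    (i : ℕ) (hi : i ≤ k) :
    quadraticChar F (1 - β ^ i) = quadraticChar F (1 - β ^ (k - i)) := by
  have hb : β ^ k = 1 := hβ ▸ pow_orderOf_eq_one β
  have : 1 - β ^ i = - (β ^ i * (1 - β ^ (k - i))) := by
    rw [mul_sub, ← pow_add, Nat.add_sub_cancel' hi, hb]; ring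
  rw [this, chi5_neg h4, map_mul, chi5_pow k hk β hβ, one_mul]

lemma chi5_sub (k : ℕ) (hk : Odd k) (β : F) (hβ : orderOf β = k)
    (a b : ℕ) (hab : a ≤ b) :
    quadraticChar F (β ^ a - β ^ b) = quadraticChar F (1 - β ^ (b - a)) := by
  have : β ^ a - β ^ b = β ^ a * (1 - β ^ (b - a)) := by
    rw [mul_sub, ← pow_add, Nat.add_sub_cancel' hab]; ring
  rw [this, map_mul, chi5_pow k hk β hβ, one_mul]

lemma des5 (h4 : Fintype.card F % 4 = 1) (k : ℕ) (hk3 : 3 < k) (β : F) (hβ : orderOf β = k) :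
    gives3Design F k ↔ ∑ a : Fin k, ∑ b : Fin k, ∑ c : Fin k,
      quadraticChar F (β ^ (a : ℕ) - β ^ (b : ℕ)) * quadraticChar F (β ^ (b : ℕ) - β ^ (c : ℕ))
        * quadraticChar F (β ^ (c : ℕ) - β ^ (a : ℕ)) = 0 := by
  rw [← W5_eq k (by omega) β hβ]
  apply iff5
  · intro h
    have := FiniteField.even_card_of_char_two h
    omega
  · obtain ⟨hi, hr⟩ := start5 k (by omega) β hβ
    rw [← hr]
    refine ⟨_, _, _, ⟨⟨0, by omega⟩, rfl⟩, ⟨⟨1, by omega⟩, rfl⟩, ⟨⟨2, by omega⟩, rfl⟩, ?_, ?_, ?_⟩ <;>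
    · intro h
      have := hi h
      simp at this

end helpers5

/-- Proposition 2.7(i): for odd `k`, whether `(q,k)` gives a 3-design is
determined by the sequence `(χ(1-β), χ(1-β²), …, χ(1-β^((k-1)/2)))`, where `β`
is a primitive `k`-th root of unity. -/
theorem stmt_5 (F F' : Type) [Field F] [Fintype F] [DecidableEq F]
    [Field F'] [Fintype F'] [DecidableEq F']
    (q q' k : ℕ) (hq : Fintype.card F = q) (hq' : Fintype.card F' = q')
    (hqodd : Odd q) (hq'odd : Odd q') (hq4 : q % 4 = 1) (hq'4 : q' % 4 = 1)
    (hkodd : Odd k) (hk3 : 3 < k)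
    (hkdvd : k ∣ q - 1) (hk'dvd : k ∣ q' - 1) (hkq : k < q - 1) (hkq' : k < q' - 1)
    (he : Even ((q - 1) / k)) (he' : Even ((q' - 1) / k))
    (β : F) (β' : F') (hβ : orderOf β = k) (hβ' : orderOf β' = k)
    (hch : ∀ i : ℕ, 1 ≤ i → i ≤ (k - 1) / 2 →
      quadraticChar F (1 - β ^ i) = quadraticChar F' (1 - β' ^ i)) :
    gives3Design F k ↔ gives3Design F' k := by
  subst hq hq'
  rw [des5 hq4 k hk3 β hβ, des5 hq'4 k hk3 β' hβ']
  have h1 : ∀ i : ℕ, i < k → quadraticChar F (1 - β ^ i) = quadraticChar F' (1 - β' ^ i) := by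
    intro i hi
    rcases Nat.eq_zero_or_pos i with rfl | hpos
    · simp
    · by_cases h : i ≤ (k - 1) / 2
      · exact hch i hpos h
      · rw [chi5_refl hq4 k hkodd β hβ i hi.le, chi5_refl hq'4 k hkodd β' hβ' i hi.le]
        obtain ⟨m, hm⟩ := hkodd
        exact hch _ (by omega) (by omega)
  have h2 : ∀ a b : Fin k, quadraticChar F (β ^ (a : ℕ) - β ^ (b : ℕ))
      = quadraticChar F' (β' ^ (a : ℕ) - β' ^ (b : ℕ)) := by
    intro a b
    rcases le_total (a : ℕ) b with h | h
    · rw [chi5_sub k hkodd β hβ _ _ h, chi5_sub k hkodd β' hβ' _ _ h]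
      exact h1 _ (by omega)
    · rw [← chi5_neg hq4, ← chi5_neg hq'4, neg_sub, neg_sub,
        chi5_sub k hkodd β hβ _ _ h, chi5_sub k hkodd β' hβ' _ _ h]
      exact h1 _ (by omega)
  simp only [h2]
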